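/- There exists a finite straight-line unit-distance graph (V,E) in the plane with exactly 38 unit triangles whose interiors are pairwise disjoint, in which every edge is contained in a unit triangle, there are no additional triangles, every vertex has degree 2 or degree 4, and there are two distinct lines g₁ and g₂ through a common point, meeting at angle 2π/100 = 3.6°, such that every vertex of degree 2 lies on g₁ ∪ g₂ and the rotation by 2π/100 about the intersection point of g₁ and g₂ maps the set of degree-2 vertices lying on g₁ bijectively onto the set of degree-2 vertices lying on g₂. -/

import Mathlib

/-!
Straight-line unit-distance graphs in the Euclidean plane, modelled as ℂ.
-/

noncomputable section
open scoped Classical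

/-- A finite straight-line unit-distance graph in the plane: a finite vertex
set `V ⊆ ℂ` and a finite set `E` of 2-element subsets of `V` (edges), each of
whose two endpoints are at distance one. -/
structure UnitDistGraph where
  V : Finset ℂ
  E : Finset (Finset ℂ)
  edge_sub : ∀ e ∈ E, e ⊆ V
  edge_pair : ∀ e ∈ E, ∃ x y : ℂ, x ≠ y ∧ e = {x, y} ∧ dist x y = 1

namespace UnitDistGraph

/-- The closed segment drawn for an edge (the convex hull of its two endpoints). -/
def edgeSeg (e : Finset ℂ) : Set ℂ := convexHull ℝ (e : Set ℂ)

/-- The degree of a vertex: the number of edges containing it. -/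
def degree (G : UnitDistGraph) (v : ℂ) : ℕ := {e | e ∈ G.E ∧ v ∈ e}.ncard

/-- The graph is drawn planarly: two distinct closed edge segments intersect in
at most a common endpoint, and no vertex lies in the relative interior of an
edge (i.e. a vertex on a closed edge segment is an endpoint of that edge). -/
def Planar (G : UnitDistGraph) : Prop :=
  (∀ e ∈ G.E, ∀ f ∈ G.E, e ≠ f →
    edgeSeg e ∩ edgeSeg f ⊆ (e : Set ℂ) ∩ (f : Set ℂ)) ∧
  (∀ v ∈ G.V, ∀ e ∈ G.E, v ∈ edgeSeg e → v ∈ e)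

/-- The graph is 4-regular: every vertex belongs to exactly 4 edges. -/
def Regular4 (G : UnitDistGraph) : Prop := ∀ v ∈ G.V, G.degree v = 4

/-- A unit triangle: a 3-element subset of `V` all of whose pairs are edges. -/
def IsUnitTriangle (G : UnitDistGraph) (t : Finset ℂ) : Prop :=
  t ⊆ G.V ∧ t.card = 3 ∧ ∀ x ∈ t, ∀ y ∈ t, x ≠ y → ({x, y} : Finset ℂ) ∈ G.E

/-- The number of unit triangles of the graph. -/
def triangleCount (G : UnitDistGraph) : ℕ := {t : Finset ℂ | G.IsUnitTriangle t}.ncard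

/-- The graph consists only of unit triangles: every edge lies in a unit triangle. -/
def OnlyUnitTriangles (G : UnitDistGraph) : Prop :=
  ∀ e ∈ G.E, ∃ t : Finset ℂ, G.IsUnitTriangle t ∧ e ⊆ t

/-- The closed segment from `x` to `y` is a union of closed edge segments of `E`. -/
def SideCovered (G : UnitDistGraph) (x y : ℂ) : Prop :=
  ∃ S : Finset (Finset ℂ), S ⊆ G.E ∧ segment ℝ x y = ⋃ e ∈ S, edgeSeg e

/-- No additional triangles: any equilateral triangle on vertices of `V` each of
whose sides is a union of closed edge segments has side length 1. -/
def NoAdditionalTriangles (G : UnitDistGraph) : Prop :=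
  ∀ x ∈ G.V, ∀ y ∈ G.V, ∀ z ∈ G.V, x ≠ y → y ≠ z → x ≠ z →
    dist x y = dist y z → dist y z = dist z x →
    G.SideCovered x y → G.SideCovered y z → G.SideCovered z x →
    dist x y = 1

end UnitDistGraph

open UnitDistGraph

namespace UnitDistGraph

/-- Rotation of the plane about the center `c` by the angle `θ`. -/
def rot (c : ℂ) (θ : ℝ) (z : ℂ) : ℂ := c + Complex.exp (θ * Complex.I) * (z - c)

/-- The graph is invariant under the rotation about `c` by `θ`: this rotation
maps the vertex set onto itself and the edge set onto itself. -/
def RotInvariant (G : UnitDistGraph) (c : ℂ) (θ : ℝ) : Prop :=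
  (rot c θ) '' (G.V : Set ℂ) = (G.V : Set ℂ) ∧
  (Finset.image (rot c θ)) '' (G.E : Set (Finset ℂ)) = (G.E : Set (Finset ℂ))

/-- The unit triangles of the graph are non-overlapping: the interiors of the
closed triangular regions of two distinct unit triangles are disjoint. -/
def NonOverlapping (G : UnitDistGraph) : Prop :=
  ∀ t₁ t₂ : Finset ℂ, G.IsUnitTriangle t₁ → G.IsUnitTriangle t₂ → t₁ ≠ t₂ →
    interior (convexHull ℝ (t₁ : Set ℂ)) ∩ interior (convexHull ℝ (t₂ : Set ℂ)) = ∅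

/-- The line through the point `c` with direction `d`. -/
def line (c d : ℂ) : Set ℂ := {z : ℂ | ∃ t : ℝ, z = c + (t : ℂ) * d}

/-- Two unit-distance graphs are congruent if some isometry of the plane maps
the vertex set and edge set of one onto those of the other. -/
def Congruent (G₁ G₂ : UnitDistGraph) : Prop :=
  ∃ φ : ℂ ≃ᵢ ℂ, G₁.V.image φ = G₂.V ∧ G₁.E.image (Finset.image φ) = G₂.E

end UnitDistGraph

/-!
All sides of an equilateral triangle have the same sixth power as complex numbers, so this power
records a direction class of the triangle. In a family of unit triangles in which two triangles of
the same class never meet, any triangle formed by edges belongs to the family, and a segment that is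
a union of edges is a single edge: edges in one segment belong to triangles of one class, so
distinct ones are disjoint, while a segment is connected. Only the disjointness of parallel
triangles has to be arranged.

The sector consists of a zigzag chain of `n` triangles tilted alternately by `δ` and `-δ`, together
with its mirror image, the two being glued at the apexes of their triangles on the real axis, and of
a pendant triangle of tilt `φ` at each end of each chain. The only vertices of degree two are the
free vertices of the pendant triangles. For `tan δ = n * tan φ` those of one half are collinear, on
a line inclined at `φ` to the axis, and on this line the rotation by `2 * φ` about its intersection
with the axis agrees with the mirror reflection.
-/

/-! ### Separation by a linear functional -/

section Separation

variable {E : Type*} [AddCommGroup E] [Module ℝ E] [TopologicalSpace E]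
  {A B : Set E} {r : ℝ}

theorem disjoint_convexHull_of_lt_of_le (ℓ : E →L[ℝ] ℝ) (hA : ∀ x ∈ A, ℓ x < r)
    (hB : ∀ x ∈ B, r ≤ ℓ x) : Disjoint (convexHull ℝ A) (convexHull ℝ B) := by
  have hA' : convexHull ℝ A ⊆ ℓ ⁻¹' Set.Iio r :=
    convexHull_min hA (convex_halfSpace_lt ℓ.toLinearMap.isLinear r)
  have hB' : convexHull ℝ B ⊆ ℓ ⁻¹' Set.Ici r :=
    convexHull_min hB (convex_halfSpace_ge ℓ.toLinearMap.isLinear r)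
  exact ((Set.Iio_disjoint_Ici le_rfl).preimage ℓ).mono hA' hB'

theorem disjoint_interior_convexHull_of_le [IsTopologicalAddGroup E] [ContinuousSMul ℝ E]
    (ℓ : E →L[ℝ] ℝ) (hℓ : ℓ ≠ 0) (hA : ∀ x ∈ A, ℓ x ≤ r) (hB : ∀ x ∈ B, r ≤ ℓ x) :
    Disjoint (interior (convexHull ℝ A)) (interior (convexHull ℝ B)) := by
  have hA' : convexHull ℝ A ⊆ ℓ ⁻¹' Set.Iic r :=
    convexHull_min hA (convex_halfSpace_le ℓ.toLinearMap.isLinear r)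
  have hB' : convexHull ℝ B ⊆ ℓ ⁻¹' Set.Ici r :=
    convexHull_min hB (convex_halfSpace_ge ℓ.toLinearMap.isLinear r)
  have hlt : interior (convexHull ℝ A) ⊆ ℓ ⁻¹' Set.Iio r := by
    have hsub := interior_mono hA'
    rwa [← (ℓ.isOpenMap_of_ne_zero hℓ).preimage_interior_eq_interior_preimage ℓ.continuous,
      interior_Iic] at hsub
  exact ((Set.Iio_disjoint_Ici le_rfl).preimage ℓ).mono hlt (interior_subset.trans hB')

end Separation

/-! ### Graphs built from unit triangles -/

theorem sq_add_sq_eq_mul_of_norm_eq_one {a b : ℂ} (ha : ‖a‖ = 1) (hb : ‖b‖ = 1)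
    (hab : ‖a - b‖ = 1) : a ^ 2 + b ^ 2 = a * b := by
  have norm_sq {z : ℂ} (hz : ‖z‖ = 1) : z * starRingEnd ℂ z = 1 := by
    rw [Complex.mul_conj', hz]; norm_num
  have hab' := norm_sq hab
  rw [map_sub] at hab'
  linear_combination (b * a - b ^ 2) * norm_sq ha + (a * b - a ^ 2) * norm_sq hb - a * b * hab'

theorem sub_pow_six_eq_of_dist_eq_one {x y z : ℂ} (hxy : dist x y = 1) (hxz : dist x z = 1)
    (hyz : dist y z = 1) : (x - y) ^ 6 = (x - z) ^ 6 := by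
  rw [dist_eq_norm] at hxy hxz
  have hzy : ‖(x - y) - (x - z)‖ = 1 := by rw [sub_sub_sub_cancel_left, ← dist_eq_norm', hyz]
  have h := sq_add_sq_eq_mul_of_norm_eq_one hxy hxz hzy
  linear_combination ((x - y) ^ 3 - (x - z) ^ 3) * ((x - y) + (x - z)) * h

theorem sub_sq_ne_of_dist_eq_one {x y z : ℂ} (hxz : dist x z = 1) (hyz : dist y z = 1) :
    (x - y) ^ 2 ≠ (x - z) ^ 2 := by
  intro h
  obtain h | h := sq_eq_sq_iff_eq_or_eq_neg.1 h
  · simp [sub_right_injective h] at hyz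
  · have : y - z = 2 * (x - z) := by linear_combination -h
    rw [dist_eq_norm] at hxz hyz
    norm_num [this, hxz] at hyz

theorem sub_sq_eq_of_mem_segment {x y u v u' v' : ℂ} (hu : u ∈ segment ℝ x y)
    (hv : v ∈ segment ℝ x y) (hu' : u' ∈ segment ℝ x y) (hv' : v' ∈ segment ℝ x y)
    (h : dist u v = dist u' v') : (u - v) ^ 2 = (u' - v') ^ 2 := by
  rw [segment_eq_image_lineMap] at hu hv hu' hv'
  obtain ⟨s, -, rfl⟩ := hu
  obtain ⟨t, -, rfl⟩ := hv
  obtain ⟨s', -, rfl⟩ := hu'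
  obtain ⟨t', -, rfl⟩ := hv'
  rcases eq_or_ne x y with rfl | hxy
  · simp
  have habs : |s - t| = |s' - t'| := by
    simpa [Real.dist_eq, hxy] using h
  have hsq : ((s - t : ℝ) : ℂ) ^ 2 = ((s' - t' : ℝ) : ℂ) ^ 2 := by
    exact_mod_cast (sq_eq_sq_iff_abs_eq_abs _ _).2 habs
  simp only [AffineMap.lineMap_apply, vsub_eq_sub, vadd_eq_add, Complex.real_smul]
  push_cast at hsq
  linear_combination (y - x) ^ 2 * hsq

theorem exists_eq_pair_of_mem_of_card_eq_two {α : Type*} [DecidableEq α] {e : Finset α} {a : α}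
    (he : e.card = 2) (ha : a ∈ e) : ∃ b, a ≠ b ∧ e = {a, b} := by
  obtain ⟨b, hb⟩ := Finset.card_eq_one.1
    (by rw [Finset.card_erase_of_mem ha, he] : (e.erase a).card = 1)
  have hab : b ∈ e.erase a := hb ▸ Finset.mem_singleton_self b
  exact ⟨b, (Finset.ne_of_mem_erase hab).symm, by rw [← hb, Finset.insert_erase ha]⟩

theorem exists_eq_biUnion_of_isConnected {X α : Type*} [TopologicalSpace X] {S : Finset α}
    {s : α → Set X} (hconn : IsConnected (⋃ a ∈ S, s a)) (hne : ∀ a ∈ S, (s a).Nonempty)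
    (hclosed : ∀ a ∈ S, IsClosed (s a)) (hdisj : (S : Set α).PairwiseDisjoint s) :
    ∃ a ∈ S, s a = ⋃ a ∈ S, s a := by
  have hsub (a : S) : s a ⊆ ⋃ a ∈ S, s a := Set.subset_biUnion_of_mem a.2
  have : PreconnectedSpace (⋃ a ∈ S, s a) :=
    isPreconnected_iff_preconnectedSpace.1 hconn.isPreconnected
  have : Subsingleton S := by
    apply subsingleton_of_disjoint_isClosed_iUnion_eq_univ
      (s := fun a : S => ((↑) : (⋃ a ∈ S, s a) → X) ⁻¹' s a)
    · exact fun a => let ⟨x, hx⟩ := hne a a.2; ⟨⟨x, hsub a hx⟩, hx⟩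
    · exact fun a b hab => (hdisj a.2 b.2 (Subtype.coe_injective.ne hab)).preimage _
    · exact fun a => (hclosed a a.2).preimage continuous_subtype_val
    · rw [← Set.preimage_iUnion, Set.iUnion_subtype, Subtype.coe_preimage_self]
  obtain ⟨x, hx⟩ := hconn.nonempty
  obtain ⟨a, ha, -⟩ := Set.mem_iUnion₂.1 hx
  refine ⟨a, ha, (hsub ⟨a, ha⟩).antisymm (Set.iUnion₂_subset fun b hb => ?_)⟩
  exact (congrArg (s ·.1) (Subsingleton.elim (⟨b, hb⟩ : S) ⟨a, ha⟩)).subset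

/-- A family of equilateral unit triangles, recorded by their vertex sets, in which triangles with
parallel sides are disjoint. All sides of an equilateral triangle have the same sixth power as
complex numbers; this is the direction class `dir i` of the triangle `tri i`. -/
structure UnitTriangleFamily (ι : Type*) where
  tri : ι → Finset ℂ
  dir : ι → ℂ
  card_tri : ∀ i, (tri i).card = 3
  dist_eq_one : ∀ i, ∀ x ∈ tri i, ∀ y ∈ tri i, x ≠ y → dist x y = 1
  sub_pow_six : ∀ i, ∀ x ∈ tri i, ∀ y ∈ tri i, x ≠ y → (x - y) ^ 6 = dir i
  disjoint_of_dir_eq : ∀ i j, i ≠ j → dir i = dir j →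
    Disjoint (convexHull ℝ (tri i : Set ℂ)) (convexHull ℝ (tri j : Set ℂ))

namespace UnitTriangleFamily

variable {ι : Type*} (F : UnitTriangleFamily ι)

theorem eq_of_dir_eq_of_mem_convexHull {i j : ι} (h : F.dir i = F.dir j) {z : ℂ}
    (hi : z ∈ convexHull ℝ (F.tri i : Set ℂ)) (hj : z ∈ convexHull ℝ (F.tri j : Set ℂ)) :
    i = j :=
  by_contra fun hij => Set.disjoint_left.1 (F.disjoint_of_dir_eq i j hij h) hi hj

theorem eq_of_dir_eq_of_mem {i j : ι} (h : F.dir i = F.dir j) {z : ℂ}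
    (hi : z ∈ F.tri i) (hj : z ∈ F.tri j) : i = j :=
  F.eq_of_dir_eq_of_mem_convexHull h (subset_convexHull ℝ _ hi) (subset_convexHull ℝ _ hj)

theorem eq_of_pair_mem {i j : ι} {x y : ℂ} (hxy : x ≠ y) (hxi : x ∈ F.tri i) (hyi : y ∈ F.tri i)
    (hxj : x ∈ F.tri j) (hyj : y ∈ F.tri j) : i = j :=
  F.eq_of_dir_eq_of_mem
    ((F.sub_pow_six i x hxi y hyi hxy).symm.trans (F.sub_pow_six j x hxj y hyj hxy)) hxi hxj

theorem dir_eq_of_sub_sq_eq {i j : ι} {x y x' y' : ℂ} (hxy : x ≠ y) (hx : x ∈ F.tri i)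
    (hy : y ∈ F.tri i) (hxy' : x' ≠ y') (hx' : x' ∈ F.tri j) (hy' : y' ∈ F.tri j)
    (h : (x - y) ^ 2 = (x' - y') ^ 2) : F.dir i = F.dir j := by
  rw [← F.sub_pow_six i x hx y hy hxy, ← F.sub_pow_six j x' hx' y' hy' hxy']
  linear_combination ((x - y) ^ 4 + (x - y) ^ 2 * (x' - y') ^ 2 + (x' - y') ^ 4) * h

theorem tri_injective : Function.Injective F.tri := by
  intro i j hij
  obtain ⟨x, hx, y, hy, hxy⟩ := Finset.one_lt_card.1 (by rw [F.card_tri i]; norm_num)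
  exact F.eq_of_pair_mem hxy hx hy (hij ▸ hx) (hij ▸ hy)

variable [Fintype ι]

/-- The graph whose edges are the sides of the triangles of the family. -/
def graph : UnitDistGraph where
  V := Finset.univ.biUnion F.tri
  E := Finset.univ.biUnion fun i => (F.tri i).powersetCard 2
  edge_sub e he := by
    obtain ⟨i, hi, he⟩ := Finset.mem_biUnion.1 he
    exact (Finset.mem_powersetCard.1 he).1.trans (Finset.subset_biUnion_of_mem F.tri hi)
  edge_pair e he := by
    obtain ⟨i, -, he⟩ := Finset.mem_biUnion.1 he
    obtain ⟨hsub, hcard⟩ := Finset.mem_powersetCard.1 he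
    obtain ⟨x, y, hxy, rfl⟩ := Finset.card_eq_two.1 hcard
    exact ⟨x, y, hxy, rfl, F.dist_eq_one i x (hsub (by simp)) y (hsub (by simp)) hxy⟩

theorem mem_V {v : ℂ} : v ∈ F.graph.V ↔ ∃ i, v ∈ F.tri i := by
  simp [graph]

theorem mem_E {e : Finset ℂ} : e ∈ F.graph.E ↔ ∃ i, e ⊆ F.tri i ∧ e.card = 2 := by
  simp [graph]

theorem pair_mem_E {x y : ℂ} (hxy : x ≠ y) :
    {x, y} ∈ F.graph.E ↔ ∃ i, x ∈ F.tri i ∧ y ∈ F.tri i := by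
  simp [mem_E, Finset.card_pair hxy, Finset.insert_subset_iff]

theorem isUnitTriangle_tri (i : ι) : F.graph.IsUnitTriangle (F.tri i) :=
  ⟨Finset.subset_biUnion_of_mem F.tri (Finset.mem_univ i), F.card_tri i,
    fun _ hx _ hy hxy => (F.pair_mem_E hxy).2 ⟨i, hx, hy⟩⟩

theorem isUnitTriangle_iff {t : Finset ℂ} :
    F.graph.IsUnitTriangle t ↔ ∃ i, F.tri i = t := by
  refine ⟨fun ⟨_, hcard, hedge⟩ => ?_, fun ⟨i, hi⟩ => hi ▸ F.isUnitTriangle_tri i⟩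
  have exists_tri {u v : ℂ} (hu : u ∈ t) (hv : v ∈ t) (huv : u ≠ v) :
      ∃ i, u ∈ F.tri i ∧ v ∈ F.tri i ∧ dist u v = 1 ∧ (u - v) ^ 6 = F.dir i := by
    obtain ⟨i, hui, hvi⟩ := (F.pair_mem_E huv).1 (hedge u hu v hv huv)
    exact ⟨i, hui, hvi, F.dist_eq_one i u hui v hvi huv, F.sub_pow_six i u hui v hvi huv⟩
  obtain ⟨x, hx, y, hy, hxy⟩ := Finset.one_lt_card.1 (by rw [hcard]; norm_num : 1 < t.card)
  obtain ⟨i, hxi, hyi, dxy, hdir⟩ := exists_tri hx hy hxy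
  have hsub : t ⊆ F.tri i := by
    intro z hz
    by_cases hxz : x = z
    · exact hxz ▸ hxi
    by_cases hyz : y = z
    · exact hyz ▸ hyi
    obtain ⟨j, hxj, hzj, dxz, hdir'⟩ := exists_tri hx hz hxz
    obtain ⟨-, -, -, dyz, -⟩ := exists_tri hy hz hyz
    have hij : F.dir i = F.dir j := by
      rw [← hdir, ← hdir', sub_pow_six_eq_of_dist_eq_one dxy dxz dyz]
    exact F.eq_of_dir_eq_of_mem hij hxi hxj ▸ hzj
  exact ⟨i, (Finset.eq_of_subset_of_card_le hsub (by rw [F.card_tri, hcard])).symm⟩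

theorem triangleCount_graph : F.graph.triangleCount = Fintype.card ι := by
  have : {t | F.graph.IsUnitTriangle t} = Set.range F.tri :=
    Set.ext fun _ => F.isUnitTriangle_iff
  rw [triangleCount, this, ← Set.image_univ, Set.ncard_image_of_injective _ F.tri_injective,
    Set.ncard_univ, Nat.card_eq_fintype_card]

theorem onlyUnitTriangles_graph : F.graph.OnlyUnitTriangles := fun _ he =>
  let ⟨i, hi, _⟩ := F.mem_E.1 he
  ⟨F.tri i, F.isUnitTriangle_tri i, hi⟩

theorem nonOverlapping_graph
    (h : ∀ i j, i ≠ j → Disjoint (interior (convexHull ℝ (F.tri i : Set ℂ)))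
      (interior (convexHull ℝ (F.tri j : Set ℂ)))) : F.graph.NonOverlapping := by
  intro t₁ t₂ h₁ h₂ hne
  obtain ⟨i, rfl⟩ := F.isUnitTriangle_iff.1 h₁
  obtain ⟨j, rfl⟩ := F.isUnitTriangle_iff.1 h₂
  exact (h i j fun hij => hne (hij ▸ rfl)).inter_eq

theorem degree_graph (v : ℂ) :
    F.graph.degree v = 2 * (Finset.univ.filter fun i => v ∈ F.tri i).card := by
  have card_edges {t : Finset ℂ} (ht : t.card = 3) (hv : v ∈ t) :
      ((t.powersetCard 2).filter (v ∈ ·)).card = 2 := by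
    simpa [ht] using Finset.card_filter_powersetCard_subset {v} t 2
      (Finset.singleton_subset_iff.2 hv)
  have hunion : {e | e ∈ F.graph.E ∧ v ∈ e} =
      ((Finset.univ.filter fun i => v ∈ F.tri i).biUnion
        fun i => ((F.tri i).powersetCard 2).filter (v ∈ ·) : Finset (Finset ℂ)) := by
    ext e
    simp only [mem_E, Set.mem_ofPred_eq, Finset.coe_biUnion, Finset.coe_filter, Set.mem_iUnion,
      Finset.mem_univ, true_and, Finset.mem_powersetCard, exists_prop]
    exact ⟨fun ⟨⟨i, hi, hc⟩, hv⟩ => ⟨i, hi hv, ⟨hi, hc⟩, hv⟩,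
      fun ⟨i, _, hic, hv⟩ => ⟨⟨i, hic⟩, hv⟩⟩
  rw [degree, hunion, Set.ncard_coe_finset, Finset.card_biUnion, Finset.sum_congr rfl
    fun i hi => card_edges (F.card_tri i) (Finset.mem_filter.1 hi).2, Finset.sum_const, smul_eq_mul,
    mul_comm]
  intro i _ j _ hij
  refine Finset.disjoint_left.2 fun e hei hej => hij ?_
  simp only [Finset.mem_filter, Finset.mem_powersetCard] at hei hej
  obtain ⟨x, y, hxy, rfl⟩ := Finset.card_eq_two.1 hei.1.2
  exact F.eq_of_pair_mem hxy (hei.1.1 (by simp)) (hei.1.1 (by simp)) (hej.1.1 (by simp))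
    (hej.1.1 (by simp))

theorem disjoint_edgeSeg_of_subset_segment {e f : Finset ℂ} {p q : ℂ} (he : e ∈ F.graph.E)
    (hf : f ∈ F.graph.E) (hne : e ≠ f) (hep : ↑e ⊆ segment ℝ p q) (hfp : ↑f ⊆ segment ℝ p q) :
    Disjoint (edgeSeg e) (edgeSeg f) := by
  obtain ⟨i, hei, he2⟩ := F.mem_E.1 he
  obtain ⟨j, hfj, hf2⟩ := F.mem_E.1 hf
  have sq_eq {x y x' y' : ℂ} (hx : x ∈ e) (hy : y ∈ e) (hxy : x ≠ y) (hx' : x' ∈ f)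
      (hy' : y' ∈ f) (hxy' : x' ≠ y') : (x - y) ^ 2 = (x' - y') ^ 2 :=
    sub_sq_eq_of_mem_segment (hep hx) (hep hy) (hfp hx') (hfp hy')
      ((F.dist_eq_one i x (hei hx) y (hei hy) hxy).trans
        (F.dist_eq_one j x' (hfj hx') y' (hfj hy') hxy').symm)
  have hdir : F.dir i = F.dir j := by
    obtain ⟨x, hx, y, hy, hxy⟩ := Finset.one_lt_card.1 (he2 ▸ one_lt_two)
    obtain ⟨x', hx', y', hy', hxy'⟩ := Finset.one_lt_card.1 (hf2 ▸ one_lt_two)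
    exact F.dir_eq_of_sub_sq_eq hxy (hei hx) (hei hy) hxy' (hfj hx') (hfj hy')
      (sq_eq hx hy hxy hx' hy' hxy')
  refine Set.disjoint_left.2 fun z hze hzf => ?_
  obtain rfl : i = j := F.eq_of_dir_eq_of_mem_convexHull hdir
    (convexHull_mono (Finset.coe_subset.2 hei) hze) (convexHull_mono (Finset.coe_subset.2 hfj) hzf)
  obtain ⟨a, ha⟩ := Finset.inter_nonempty_of_card_lt_card_add_card hei hfj
    (by rw [F.card_tri, he2, hf2]; norm_num)
  obtain ⟨hae, haf⟩ := Finset.mem_inter.1 ha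
  obtain ⟨b, hab, rfl⟩ := exists_eq_pair_of_mem_of_card_eq_two he2 hae
  obtain ⟨c, hac, rfl⟩ := exists_eq_pair_of_mem_of_card_eq_two hf2 haf
  have hai : a ∈ F.tri i := hei (by simp)
  have hbi : b ∈ F.tri i := hei (by simp)
  have hci : c ∈ F.tri i := hfj (by simp)
  have hbc : b ≠ c := fun h => hne (h ▸ rfl)
  exact sub_sq_ne_of_dist_eq_one (F.dist_eq_one i a hai c hci hac) (F.dist_eq_one i b hbi c hci hbc)
    (sq_eq (by simp) (by simp) hab (by simp) (by simp) hac)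

theorem dist_eq_one_of_sideCovered {p q : ℂ} (h : F.graph.SideCovered p q) : dist p q = 1 := by
  obtain ⟨S, hS, hcover⟩ := h
  have edge_subset {e : Finset ℂ} (he : e ∈ S) : ↑e ⊆ segment ℝ p q :=
    (subset_convexHull ℝ _).trans (hcover ▸ Set.subset_biUnion_of_mem (u := edgeSeg) he)
  have hconn : IsConnected (⋃ e ∈ S, edgeSeg e) :=
    hcover ▸ (convex_segment p q).isConnected ⟨p, left_mem_segment ℝ p q⟩
  obtain ⟨e, he, hseg⟩ := exists_eq_biUnion_of_isConnected hconn
    (fun e he => by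
      obtain ⟨x, y, -, hxy, -⟩ := F.graph.edge_pair e (hS he)
      exact ⟨x, subset_convexHull ℝ _ (by simp [hxy])⟩)
    (fun e _ => e.finite_toSet.isClosed_convexHull ℝ)
    (fun e he f hf hef => F.disjoint_edgeSeg_of_subset_segment (hS he) (hS hf) hef
      (edge_subset he) (edge_subset hf))
  obtain ⟨x, y, -, rfl, hxy⟩ := F.graph.edge_pair e (hS he)
  rw [← hcover, edgeSeg, Finset.coe_pair, convexHull_pair] at hseg
  rw [← Metric.diam_pair, ← convexHull_diam, convexHull_pair, ← hseg, ← convexHull_pair,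
    convexHull_diam, Metric.diam_pair, hxy]

theorem noAdditionalTriangles_graph : F.graph.NoAdditionalTriangles :=
  fun _ _ _ _ _ _ _ _ _ _ _ h _ _ => F.dist_eq_one_of_sideCovered h

end UnitTriangleFamily

/-! ### Equilateral triangles of given tilt -/

open Real

/-- The unit vector `e^{iθ}`. -/
def unitVec (θ : ℝ) : ℂ := Complex.exp (θ * Complex.I)

@[simp]
theorem unitVec_re (θ : ℝ) : (unitVec θ).re = cos θ := Complex.exp_ofReal_mul_I_re θ

@[simp]
theorem unitVec_im (θ : ℝ) : (unitVec θ).im = sin θ := Complex.exp_ofReal_mul_I_im θ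

@[simp]
theorem norm_unitVec (θ : ℝ) : ‖unitVec θ‖ = 1 := Complex.norm_exp_ofReal_mul_I θ

theorem unitVec_ne_zero (θ : ℝ) : unitVec θ ≠ 0 := Complex.exp_ne_zero _

theorem unitVec_add (θ θ' : ℝ) : unitVec (θ + θ') = unitVec θ * unitVec θ' := by
  simp only [unitVec, Complex.ofReal_add, add_mul, Complex.exp_add]

theorem conj_unitVec (θ : ℝ) : starRingEnd ℂ (unitVec θ) = unitVec (-θ) := by
  apply Complex.ext <;> simp

theorem unitVec_pow (θ : ℝ) (k : ℕ) : unitVec θ ^ k = unitVec (k * θ) := by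
  simp only [unitVec, ← Complex.exp_nat_mul, Complex.ofReal_mul, Complex.ofReal_natCast, mul_assoc]

theorem unitVec_sq_eq_sub_one : unitVec (π / 3) ^ 2 = unitVec (π / 3) - 1 := by
  have h3 : √3 ^ 2 = 3 := Real.sq_sqrt (by norm_num)
  apply Complex.ext <;> simp [pow_two] <;> linarith

/-- The vertices of the equilateral unit triangle with a vertex `a` and sides in the directions
`θ` and `θ + π / 3` from `a`. -/
def unitTriangle (a : ℂ) (θ : ℝ) : Finset ℂ := {a, a + unitVec θ, a + unitVec (θ + π / 3)}

theorem exists_sub_eq_unitVec_mul {a x y : ℂ} {θ : ℝ} (hx : x ∈ unitTriangle a θ)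
    (hy : y ∈ unitTriangle a θ) (hxy : x ≠ y) : ∃ ζ : ℂ, ζ ^ 6 = 1 ∧ x - y = unitVec θ * ζ := by
  set ω := unitVec (π / 3) with hω
  have h : ω ^ 2 = ω - 1 := unitVec_sq_eq_sub_one
  have h6 : ω ^ 6 = 1 := by linear_combination (ω ^ 4 + ω ^ 3 - ω - 1) * h
  simp only [unitTriangle, unitVec_add, Finset.mem_insert, Finset.mem_singleton, ← hω] at hx hy
  obtain rfl | rfl | rfl := hx <;> obtain rfl | rfl | rfl := hy
  · exact absurd rfl hxy
  · exact ⟨-1, by norm_num, by ring⟩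
  · exact ⟨-ω, by linear_combination h6, by ring⟩
  · exact ⟨1, by norm_num, by ring⟩
  · exact absurd rfl hxy
  · exact ⟨-ω ^ 2, by linear_combination (ω ^ 6 + 1) * h6, by linear_combination unitVec θ * h⟩
  · exact ⟨ω, h6, by ring⟩
  · exact ⟨ω ^ 2, by linear_combination (ω ^ 6 + 1) * h6, by linear_combination -unitVec θ * h⟩
  · exact absurd rfl hxy

theorem dist_eq_one_of_mem_unitTriangle {a x y : ℂ} {θ : ℝ} (hx : x ∈ unitTriangle a θ)
    (hy : y ∈ unitTriangle a θ) (hxy : x ≠ y) : dist x y = 1 := by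
  obtain ⟨ζ, hζ, h⟩ := exists_sub_eq_unitVec_mul hx hy hxy
  rw [dist_eq_norm, h, norm_mul, norm_unitVec, Complex.norm_eq_one_of_pow_eq_one hζ (by norm_num),
    one_mul]

theorem sub_pow_six_of_mem_unitTriangle {a x y : ℂ} {θ : ℝ} (hx : x ∈ unitTriangle a θ)
    (hy : y ∈ unitTriangle a θ) (hxy : x ≠ y) : (x - y) ^ 6 = unitVec (6 * θ) := by
  obtain ⟨ζ, hζ, h⟩ := exists_sub_eq_unitVec_mul hx hy hxy
  rw [h, mul_pow, hζ, mul_one, unitVec_pow]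
  norm_num

theorem unitVec_six_mul_inj {θ θ' : ℝ} (hθ : |θ| < π / 6) (hθ' : |θ'| < π / 6)
    (h : unitVec (6 * θ) = unitVec (6 * θ')) : θ = θ' := by
  rw [abs_lt] at hθ hθ'
  have h6 := Complex.exp_inj_of_neg_pi_lt_of_le_pi (x := (6 * θ : ℝ) * Complex.I)
    (y := (6 * θ' : ℝ) * Complex.I) (by simp; linarith) (by simp; linarith) (by simp; linarith)
    (by simp; linarith) h
  have := Complex.ofReal_injective (mul_right_cancel₀ Complex.I_ne_zero h6)
  linarith

/-! ### Lines exchanged by complex conjugation -/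

section Line

variable {φ : ℝ}

theorem exists_mem_line_unitVec (hφ : sin φ ≠ 0) (z : ℂ) : ∃ c : ℝ, z ∈ line c (unitVec φ) := by
  refine ⟨z.re - z.im / sin φ * cos φ, z.im / sin φ, ?_⟩
  apply Complex.ext
  · rw [Complex.add_re, Complex.re_ofReal_mul, Complex.ofReal_re, unitVec_re, sub_add_cancel]
  · rw [Complex.add_im, Complex.im_ofReal_mul, Complex.ofReal_im, unitVec_im, zero_add,
      div_mul_cancel₀ _ hφ]

theorem add_ofReal_mul_mem_line {c d z : ℂ} (hz : z ∈ line c d) (t : ℝ) : z + t * d ∈ line c d := by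
  obtain ⟨u, rfl⟩ := hz
  exact ⟨u + t, by push_cast; ring⟩

theorem conj_mem_line {c : ℝ} {z : ℂ} (hz : z ∈ line c (unitVec φ)) :
    starRingEnd ℂ z ∈ line c (unitVec (-φ)) := by
  obtain ⟨t, rfl⟩ := hz
  exact ⟨t, by simp [conj_unitVec]⟩

theorem rot_eq_conj {c : ℝ} {z : ℂ} (hz : z ∈ line c (unitVec (-φ))) :
    rot c (2 * φ) z = starRingEnd ℂ z := by
  obtain ⟨t, rfl⟩ := hz
  have h : unitVec (2 * φ) * unitVec (-φ) = unitVec φ := by rw [← unitVec_add]; ring_nf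
  rw [map_add, map_mul, Complex.conj_ofReal, Complex.conj_ofReal, conj_unitVec, neg_neg, rot,
    ← unitVec, ← h]
  ring

theorem rot_image_inter_line {D : Set ℂ} (hD : ∀ z ∈ D, starRingEnd ℂ z ∈ D) (c : ℝ) :
    rot c (2 * φ) '' (D ∩ line c (unitVec (-φ))) = D ∩ line c (unitVec φ) := by
  have hconj {z : ℂ} (hz : z ∈ line c (unitVec (-φ))) : starRingEnd ℂ z ∈ line c (unitVec φ) := by
    simpa using conj_mem_line hz
  ext z
  constructor
  · rintro ⟨z, ⟨hzD, hz⟩, rfl⟩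
    rw [rot_eq_conj hz]
    exact ⟨hD z hzD, hconj hz⟩
  · rintro ⟨hzD, hz⟩
    refine ⟨starRingEnd ℂ z, ⟨hD z hzD, conj_mem_line hz⟩, ?_⟩
    rw [rot_eq_conj (conj_mem_line hz), Complex.conj_conj]

theorem line_unitVec_neg_ne (hsin : sin φ ≠ 0) (hcos : cos φ ≠ 0) (c : ℂ) :
    line c (unitVec (-φ)) ≠ line c (unitVec φ) := by
  intro h
  obtain ⟨t, ht⟩ : c + unitVec φ ∈ line c (unitVec (-φ)) := h ▸ ⟨1, by simp⟩
  have ht := add_left_cancel ht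
  have hre : cos φ = t * cos φ := by simpa using congrArg Complex.re ht
  have him : sin φ = -(t * sin φ) := by simpa using congrArg Complex.im ht
  have h1 : t = 1 := (mul_eq_right₀ hcos).1 hre.symm
  exact hsin (by rw [h1] at him; linarith)

end Line

/-! ### The sector -/

/-- The parameters of a sector of opening angle `2 * φ`, bounded by two mirror chains of `n` links
each. The bound on `n * tan φ` says that the links are tilted by less than `π / 6`. -/
structure RingSector (n : ℕ) where
  φ : ℝ
  odd_n : Odd n
  one_lt_n : 1 < n
  φ_pos : 0 < φ
  φ_lt_pi_div_two : φ < π / 2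
  mul_tan_lt : n * tan φ < tan (π / 6)

namespace RingSector

variable {n : ℕ}

/-- The vertices of the half of the sector below the real axis: the `n` vertices on the axis, the
`n + 1` vertices of the chain, and for each pendant triangle, at the left (`e = false`) or right
(`e = true`) end of the chain, its left (`r = false`) and right (`r = true`) free vertex. -/
inductive Vertex (n : ℕ) : Type
  | axis (i : Fin n)
  | chain (k : Fin (n + 1))
  | tip (e r : Bool)

/-- The triangles of the lower half: `inl i` is the `i`-th link of the chain, `inr e` the pendant
triangle at its left (`e = false`) or right (`e = true`) end. -/
abbrev Cell (n : ℕ) : Type := Fin n ⊕ Bool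

/-- The end of the chain at which a pendant triangle hangs. -/
def chainEnd : Bool → Fin (n + 1)
  | false => 0
  | true => Fin.last n

/-- The vertices of a triangle of the lower half. -/
def cellVertices : Cell n → Finset (Vertex n)
  | .inl i => {.chain i.castSucc, .chain i.succ, .axis i}
  | .inr e => {.tip e false, .tip e true, .chain (chainEnd e)}

theorem card_cellVertices (c : Cell n) : (cellVertices c).card = 3 := by
  rcases c with i | e <;> simp [cellVertices, Finset.card_insert_of_notMem, Fin.ext_iff]

variable (P : RingSector n)

/-- The tilt of the links, whose signs alternate along the chain. It is chosen so that the left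
ends of the two pendant triangles differ by a vector parallel to their sides. -/
def δ : ℝ := arctan (n * tan P.φ)

theorem tan_φ_pos : 0 < tan P.φ := tan_pos_of_pos_of_lt_pi_div_two P.φ_pos P.φ_lt_pi_div_two

theorem φ_lt_δ : P.φ < P.δ := by
  have hn : (1 : ℝ) < n := by exact_mod_cast P.one_lt_n
  rw [← arctan_tan (by linarith [P.φ_pos, pi_pos]) P.φ_lt_pi_div_two]
  exact arctan_strictMono (lt_mul_of_one_lt_left P.tan_φ_pos hn)

theorem δ_pos : 0 < P.δ := P.φ_pos.trans P.φ_lt_δ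

theorem δ_lt_pi_div_six : P.δ < π / 6 := by
  rw [← arctan_tan (x := π / 6) (by linarith [pi_pos]) (by linarith [pi_pos])]
  exact arctan_strictMono P.mul_tan_lt

theorem φ_lt_pi_div_six : P.φ < π / 6 := P.φ_lt_δ.trans P.δ_lt_pi_div_six

theorem sin_φ_pos : 0 < sin P.φ :=
  sin_pos_of_pos_of_lt_pi P.φ_pos (by linarith [P.φ_lt_pi_div_six, pi_pos])

theorem cos_φ_pos : 0 < cos P.φ :=
  cos_pos_of_mem_Ioo ⟨by linarith [P.φ_pos, pi_pos], P.φ_lt_pi_div_two⟩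

theorem sin_δ_pos : 0 < sin P.δ :=
  sin_pos_of_pos_of_lt_pi P.δ_pos (by linarith [P.δ_lt_pi_div_six, pi_pos])

theorem sqrt_three_div_two_lt_cos_δ : √3 / 2 < cos P.δ := by
  rw [← cos_pi_div_six]
  exact cos_lt_cos_of_nonneg_of_le_pi P.δ_pos.le (by linarith [pi_pos]) P.δ_lt_pi_div_six

theorem cos_δ_pos : 0 < cos P.δ := lt_trans (by positivity) P.sqrt_three_div_two_lt_cos_δ

theorem sqrt_three_mul_sin_δ_lt : √3 * sin P.δ < cos P.δ := by
  have h : sin (P.δ - π / 6) < 0 :=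
    sin_neg_of_neg_of_neg_pi_lt (by linarith [P.δ_lt_pi_div_six]) (by linarith [P.δ_pos, pi_pos])
  rw [sin_sub, cos_pi_div_six, sin_pi_div_six] at h
  linarith

theorem sin_δ_lt : sin P.δ < √3 * cos P.δ := by
  have h : 1 < √3 := lt_sqrt_of_sq_lt (by norm_num)
  nlinarith [P.sqrt_three_mul_sin_δ_lt, P.sin_δ_pos, P.cos_δ_pos]

theorem sin_δ_mul_cos_φ : sin P.δ * cos P.φ = n * (sin P.φ * cos P.δ) := by
  have h : tan P.δ = n * tan P.φ := tan_arctan _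
  rw [tan_eq_sin_div_cos, tan_eq_sin_div_cos] at h
  have := P.cos_δ_pos.ne'
  have := P.cos_φ_pos.ne'
  field_simp at h
  linarith

/-- The `k`-th vertex of the chain. As the links are tilted alternately by `δ` and `-δ`, the height
takes two values; it is normalised so that the apexes of the links lie on the real axis. -/
def chainPoint (k : ℕ) : ℂ := ⟨k * cos P.δ, ((-1) ^ k * sin P.δ - √3 * cos P.δ) / 2⟩

/-- The coordinates of the vertices of the lower half. -/
def pos : Vertex n → ℂ
  | .axis i => ⟨i * cos P.δ + (cos P.δ + (-1) ^ (i : ℕ) * (√3 * sin P.δ)) / 2, 0⟩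
  | .chain k => P.chainPoint k
  | .tip e false => P.chainPoint (chainEnd e : Fin (n + 1)) - unitVec (π / 3 - P.φ)
  | .tip e true => P.chainPoint (chainEnd e : Fin (n + 1)) + unitVec (-(π / 3 + P.φ))

theorem right_tip_eq (e : Bool) : P.pos (.tip e true) = P.pos (.tip e false) + unitVec (-P.φ) := by
  apply Complex.ext <;> simp [pos, cos_add, sin_add, cos_sub, sin_sub] <;> ring

/-- The angle between the real axis and a side of a triangle of the lower half. -/
def tilt : Cell n → ℝ
  | .inl i => -((-1) ^ (i : ℕ) * P.δ)
  | .inr _ => -P.φ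

theorem exists_image_pos_eq_unitTriangle (c : Cell n) :
    ∃ a, (cellVertices c).image P.pos = unitTriangle a (P.tilt c) := by
  rcases c with i | e
  · refine ⟨P.chainPoint i, ?_⟩
    have hsucc : P.chainPoint (i + 1) = P.chainPoint i + unitVec (P.tilt (.inl i)) := by
      rcases neg_one_pow_eq_or ℝ i with h | h <;>
        apply Complex.ext <;> simp [chainPoint, tilt, pow_succ, h] <;> ring
    have haxis : P.pos (.axis i) = P.chainPoint i + unitVec (P.tilt (.inl i) + π / 3) := by
      rcases neg_one_pow_eq_or ℝ i with h | h <;> apply Complex.ext <;>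
        simp [chainPoint, pos, tilt, cos_add, sin_add, h] <;> ring
    simp [cellVertices, unitTriangle, Finset.image_insert, ← hsucc, ← haxis, pos]
  · set b := P.chainPoint (chainEnd e : Fin (n + 1))
    refine ⟨b - unitVec (π / 3 - P.φ), ?_⟩
    have hchain : b = b - unitVec (π / 3 - P.φ) + unitVec (-P.φ + π / 3) := by
      rw [neg_add_eq_sub, sub_add_cancel]
    simp only [cellVertices, unitTriangle, Finset.image_insert, Finset.image_singleton, tilt,
      right_tip_eq]
    rw [← hchain]
    rfl

/-! ### Location of the vertices -/

theorem chainPoint_im_le (k : ℕ) : (P.chainPoint k).im ≤ (sin P.δ - √3 * cos P.δ) / 2 := by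
  rcases neg_one_pow_eq_or ℝ k with h | h <;> simp only [chainPoint, h] <;>
    linarith [P.sin_δ_pos]

theorem le_chainPoint_im (k : ℕ) : -(sin P.δ + √3 * cos P.δ) / 2 ≤ (P.chainPoint k).im := by
  rcases neg_one_pow_eq_or ℝ k with h | h <;> simp only [chainPoint, h] <;>
    linarith [P.sin_δ_pos]

theorem chainPoint_im_neg (k : ℕ) : (P.chainPoint k).im < 0 := by
  linarith [P.chainPoint_im_le k, P.sin_δ_lt]

theorem lt_axis_re (i : Fin n) : i * cos P.δ < (P.pos (.axis i)).re := by
  rcases neg_one_pow_eq_or ℝ (i : ℕ) with h | h <;> simp only [pos, h] <;>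
    linarith [P.sqrt_three_mul_sin_δ_lt, mul_pos (sqrt_pos.2 three_pos) P.sin_δ_pos, P.cos_δ_pos]

theorem axis_re_lt (i : Fin n) : (P.pos (.axis i)).re < (i + 1) * cos P.δ := by
  rcases neg_one_pow_eq_or ℝ (i : ℕ) with h | h <;> simp only [pos, h] <;>
    linarith [P.sqrt_three_mul_sin_δ_lt, mul_pos (sqrt_pos.2 three_pos) P.sin_δ_pos, P.cos_δ_pos]

theorem natCast_mul_cos_δ_le {i j : ℕ} (h : i ≤ j) : i * cos P.δ ≤ j * cos P.δ :=
  mul_le_mul_of_nonneg_right (Nat.cast_le.2 h) P.cos_δ_pos.le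

theorem link_re_mem_Icc {i : Fin n} {w : Vertex n} (hw : w ∈ cellVertices (.inl i)) :
    (P.pos w).re ∈ Set.Icc (i * cos P.δ) ((i + 1) * cos P.δ) := by
  simp only [cellVertices, Finset.mem_insert, Finset.mem_singleton] at hw
  obtain rfl | rfl | rfl := hw
  · simp [pos, chainPoint, add_mul, P.cos_δ_pos.le]
  · simp [pos, chainPoint, add_mul, P.cos_δ_pos.le]
  · exact ⟨(P.lt_axis_re i).le, (P.axis_re_lt i).le⟩

theorem link_re_add_im_lt {i : Fin n} {w : Vertex n} (hw : w ∈ cellVertices (.inl i)) :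
    (P.pos w).re + (P.pos w).im < (i + 1) * cos P.δ := by
  have hre := (P.link_re_mem_Icc hw).2
  simp only [cellVertices, Finset.mem_insert, Finset.mem_singleton] at hw
  obtain rfl | rfl | rfl := hw
  · exact add_lt_of_le_of_neg hre (P.chainPoint_im_neg _)
  · exact add_lt_of_le_of_neg hre (P.chainPoint_im_neg _)
  · exact add_lt_of_lt_of_nonpos (P.axis_re_lt i) le_rfl

theorem le_link_im {i : Fin n} {w : Vertex n} (hw : w ∈ cellVertices (.inl i)) :
    -(sin P.δ + √3 * cos P.δ) / 2 ≤ (P.pos w).im := by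
  simp only [cellVertices, Finset.mem_insert, Finset.mem_singleton] at hw
  obtain rfl | rfl | rfl := hw
  · exact P.le_chainPoint_im _
  · exact P.le_chainPoint_im _
  · exact (P.le_chainPoint_im 0).trans (P.chainPoint_im_neg 0).le

theorem le_chainPoint_slant (k : ℕ) :
    cos P.δ * (sin P.δ - √3 * cos P.δ) / 2 ≤
      sin P.δ * (P.chainPoint k).re + cos P.δ * (P.chainPoint k).im := by
  have hSC := mul_pos P.sin_δ_pos P.cos_δ_pos
  have hk : 0 ≤ (k : ℝ) + ((-1) ^ k - 1) / 2 := by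
    rcases k.even_or_odd with h | h
    · simp [h.neg_one_pow]
    · have : (1 : ℝ) ≤ k := by exact_mod_cast h.pos
      rw [h.neg_one_pow]
      linarith
  have := mul_nonneg hSC.le hk
  simp only [chainPoint]
  linarith

theorem le_link_slant {i : Fin n} {w : Vertex n} (hw : w ∈ cellVertices (.inl i)) :
    cos P.δ * (sin P.δ - √3 * cos P.δ) / 2 ≤
      sin P.δ * (P.pos w).re + cos P.δ * (P.pos w).im := by
  have hre := (P.link_re_mem_Icc hw).1
  simp only [cellVertices, Finset.mem_insert, Finset.mem_singleton] at hw
  obtain rfl | rfl | rfl := hw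
  · exact P.le_chainPoint_slant _
  · exact P.le_chainPoint_slant _
  · have hpos := mul_nonneg P.sin_δ_pos.le
      (hre.trans' (mul_nonneg i.val.cast_nonneg P.cos_δ_pos.le))
    have hneg := mul_nonneg P.cos_δ_pos.le (sub_nonneg.2 P.sin_δ_lt.le)
    simp only [pos] at hpos ⊢
    linarith

theorem tip_im_lt (e r : Bool) : (P.pos (.tip e r)).im < -(sin P.δ + √3 * cos P.δ) / 2 := by
  have hb := P.chainPoint_im_le (chainEnd e : Fin (n + 1))
  have := P.φ_pos
  have := P.δ_pos
  have := P.φ_lt_pi_div_six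
  have := P.δ_lt_pi_div_six
  cases r
  · have h : sin P.δ < sin (π / 3 - P.φ) :=
      sin_lt_sin_of_lt_of_le_pi_div_two (by linarith) (by linarith) (by linarith)
    simp only [pos, Complex.sub_im, unitVec_im]
    linarith
  · have h : sin P.δ < sin (π / 3 + P.φ) :=
      sin_lt_sin_of_lt_of_le_pi_div_two (by linarith) (by linarith) (by linarith)
    simp only [pos, Complex.add_im, unitVec_im, sin_neg]
    linarith

theorem left_tip_re_lt (e : Bool) :
    (P.pos (.tip e false)).re < (P.chainPoint (chainEnd e : Fin (n + 1))).re := by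
  have h : 0 < cos (π / 3 - P.φ) := cos_pos_of_mem_Ioo
    ⟨by linarith [P.φ_lt_pi_div_six, pi_pos], by linarith [P.φ_pos, pi_pos]⟩
  simpa [pos] using h

theorem lt_right_tip_re (e : Bool) :
    (P.chainPoint (chainEnd e : Fin (n + 1))).re < (P.pos (.tip e true)).re := by
  have h : 0 < cos (π / 3 + P.φ) := cos_pos_of_mem_Ioo
    ⟨by linarith [P.φ_pos, pi_pos], by linarith [P.φ_lt_pi_div_six, pi_pos]⟩
  simpa only [pos, Complex.add_re, unitVec_re, cos_neg, lt_add_iff_pos_right] using h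

theorem abs_pendant_re_sub_le {e : Bool} {w : Vertex n} (hw : w ∈ cellVertices (.inr e)) :
    |(P.pos w).re - (P.chainPoint (chainEnd e : Fin (n + 1))).re| ≤ 1 := by
  simp only [cellVertices, Finset.mem_insert, Finset.mem_singleton] at hw
  obtain rfl | rfl | rfl := hw
  · simp [pos, abs_cos_le_one]
  · simp only [pos, Complex.add_re, unitVec_re, cos_neg, add_sub_cancel_left, abs_cos_le_one]
  · simp [pos]

theorem left_pendant_slant_le {w : Vertex n} (hw : w ∈ cellVertices (.inr false)) :
    sin P.δ * (P.pos w).re + cos P.δ * (P.pos w).im ≤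
      cos P.δ * (sin P.δ - √3 * cos P.δ) / 2 := by
  have hend : P.chainPoint (chainEnd false : Fin (n + 1)) = ⟨0, (sin P.δ - √3 * cos P.δ) / 2⟩ := by
    simp [chainPoint, chainEnd]
  have := P.φ_pos
  have := P.δ_pos
  have := P.φ_lt_pi_div_six
  have := P.δ_lt_pi_div_six
  simp only [cellVertices, Finset.mem_insert, Finset.mem_singleton] at hw
  obtain rfl | rfl | rfl := hw
  · have h : 0 ≤ sin (P.δ + (π / 3 - P.φ)) :=
      sin_nonneg_of_nonneg_of_le_pi (by linarith) (by linarith)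
    rw [sin_add] at h
    simp only [pos, hend, Complex.sub_re, Complex.sub_im, unitVec_re, unitVec_im]
    linarith
  · have h : sin (P.δ - (π / 3 + P.φ)) ≤ 0 :=
      sin_nonpos_of_nonpos_of_neg_pi_le (by linarith) (by linarith)
    rw [sin_sub] at h
    simp only [pos, hend, Complex.add_re, Complex.add_im, unitVec_re, unitVec_im, cos_neg, sin_neg]
    linarith
  · simp only [pos, hend]
    linarith

theorem right_pendant_im_le {w : Vertex n} (hw : w ∈ cellVertices (.inr true)) :
    (P.pos w).im ≤ -(sin P.δ + √3 * cos P.δ) / 2 := by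
  simp only [cellVertices, Finset.mem_insert, Finset.mem_singleton] at hw
  obtain rfl | rfl | rfl := hw
  · exact (P.tip_im_lt _ _).le
  · exact (P.tip_im_lt _ _).le
  · simp only [pos, chainPoint, chainEnd, Fin.val_last, P.odd_n.neg_one_pow]
    linarith

theorem two_lt_chain_width : 2 < n * cos P.δ := by
  have hn : (3 : ℝ) ≤ n := by
    obtain ⟨m, hm⟩ := P.odd_n
    have := P.one_lt_n
    exact_mod_cast (by omega : 3 ≤ n)
  have h3 : 3 / 2 < √3 := lt_sqrt_of_sq_lt (by norm_num)
  nlinarith [P.sqrt_three_div_two_lt_cos_δ]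

theorem tip_im_neg (e r : Bool) : (P.pos (.tip e r)).im < 0 :=
  (P.tip_im_lt e r).trans ((P.le_chainPoint_im 0).trans_lt (P.chainPoint_im_neg 0))

theorem pos_im_nonpos (w : Vertex n) : (P.pos w).im ≤ 0 := by
  rcases w with i | k | ⟨e, r⟩
  · exact le_rfl
  · exact (P.chainPoint_im_neg k).le
  · exact (P.tip_im_neg e r).le

theorem axis_injective : Function.Injective fun i => P.pos (.axis i) := by
  have hmono : StrictMono fun i => (P.pos (.axis i)).re := fun i j hij =>
    (P.axis_re_lt i).trans_le <| (P.lt_axis_re j).le.trans' <| by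
      exact_mod_cast P.natCast_mul_cos_δ_le (Nat.succ_le_of_lt hij)
  exact Function.Injective.of_comp (f := Complex.re) hmono.injective

theorem chain_injective : Function.Injective fun k => P.pos (.chain k) := by
  intro k l h
  have hre : (k : ℝ) * cos P.δ = l * cos P.δ := congrArg Complex.re h
  exact Fin.ext (Nat.cast_injective (mul_right_cancel₀ P.cos_δ_pos.ne' hre))

theorem left_pendant_re_lt {w : Vertex n} (hw : w ∈ cellVertices (.inr false)) :
    (P.pos w).re < n * cos P.δ - 1 := by
  have h := (abs_le.1 (P.abs_pendant_re_sub_le hw)).2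
  simp only [chainPoint, chainEnd, Fin.val_zero, Nat.cast_zero, zero_mul] at h
  linarith [P.two_lt_chain_width]

theorem le_right_pendant_re {w : Vertex n} (hw : w ∈ cellVertices (.inr true)) :
    n * cos P.δ - 1 ≤ (P.pos w).re := by
  have h := (abs_le.1 (P.abs_pendant_re_sub_le hw)).1
  simp only [chainPoint, chainEnd, Fin.val_last] at h
  linarith

theorem tip_injective {e r e' r' : Bool} (h : P.pos (.tip e r) = P.pos (.tip e' r')) :
    e = e' ∧ r = r' := by
  have hends (r r' : Bool) : (P.pos (.tip false r)).re < (P.pos (.tip true r')).re :=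
    (P.left_pendant_re_lt (by cases r <;> simp [cellVertices])).trans_le
      (P.le_right_pendant_re (by cases r' <;> simp [cellVertices]))
  have hsides (e : Bool) := (P.left_tip_re_lt e).trans (P.lt_right_tip_re e)
  have hre := congrArg Complex.re h
  have he : e = e' := by
    cases e <;> cases e' <;> first | rfl | exact absurd hre (hends _ _).ne |
      exact absurd hre (hends _ _).ne'
  subst he
  cases r <;> cases r' <;> first | exact ⟨rfl, rfl⟩ | exact absurd hre (hsides e).ne |
    exact absurd hre (hsides e).ne'

theorem pos_injective : Function.Injective P.pos := by
  have chain_im_neg (k : Fin (n + 1)) : (P.pos (.chain k)).im < 0 := P.chainPoint_im_neg k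
  have tip_im_lt_chain (e r : Bool) (k : Fin (n + 1)) :
      (P.pos (.tip e r)).im < (P.pos (.chain k)).im :=
    (P.tip_im_lt e r).trans_le (P.le_chainPoint_im k)
  rintro (i | k | ⟨e, r⟩) (j | l | ⟨e', r'⟩) h
  · rw [P.axis_injective h]
  · exact absurd (congrArg Complex.im h) (chain_im_neg l).ne'
  · exact absurd (congrArg Complex.im h) (P.tip_im_neg e' r').ne'
  · exact absurd (congrArg Complex.im h) (chain_im_neg k).ne
  · rw [P.chain_injective h]
  · exact absurd (congrArg Complex.im h) (tip_im_lt_chain e' r' k).ne'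
  · exact absurd (congrArg Complex.im h) (P.tip_im_neg e r).ne
  · exact absurd (congrArg Complex.im h) (tip_im_lt_chain e r l).ne
  · obtain ⟨rfl, rfl⟩ := P.tip_injective h
    rfl

/-! ### Reflecting the lower half -/

/-- The reflection in the real axis if `s = true`, the identity if `s = false`. -/
def reflect : Bool → ℂ ≃L[ℝ] ℂ
  | false => .refl ℝ ℂ
  | true => Complex.conjCLE

@[simp]
theorem reflect_false (z : ℂ) : reflect false z = z := rfl

@[simp]
theorem reflect_true (z : ℂ) : reflect true z = starRingEnd ℂ z := rfl

theorem reflect_reflect (s s' : Bool) (z : ℂ) : reflect s (reflect s' z) = reflect (s ^^ s') z := by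
  cases s <;> cases s' <;> simp

theorem conj_reflect (s : Bool) (z : ℂ) : starRingEnd ℂ (reflect s z) = reflect (!s) z := by
  cases s <;> simp

theorem reflect_pos_eq_iff {s s' : Bool} {w w' : Vertex n} :
    reflect s (P.pos w) = reflect s' (P.pos w') ↔ w = w' ∧ (s = s' ∨ (P.pos w).im = 0) := by
  have re_reflect (s : Bool) (z : ℂ) : (reflect s z).re = z.re := by cases s <;> simp
  have abs_im_reflect (s : Bool) (z : ℂ) : |(reflect s z).im| = |z.im| := by
    cases s <;> simp
  constructor
  · intro h
    have hre : (P.pos w).re = (P.pos w').re := by rw [← re_reflect s, h, re_reflect]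
    have him : (P.pos w).im = (P.pos w').im := by
      have := congrArg (|Complex.im ·|) h
      simpa only [abs_im_reflect, abs_of_nonpos (P.pos_im_nonpos _), neg_inj] using this
    obtain rfl := P.pos_injective (Complex.ext hre him)
    refine ⟨rfl, or_iff_not_imp_left.2 fun hs => ?_⟩
    have hconj : starRingEnd ℂ (reflect s (P.pos w)) = reflect s (P.pos w) := by
      rw [conj_reflect, ← Bool.eq_not.2 (Ne.symm hs), h]
    rw [← abs_eq_zero, ← abs_im_reflect s, Complex.conj_eq_iff_im.1 hconj, abs_zero]
  · rintro ⟨rfl, rfl | him⟩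
    · rfl
    · cases s <;> cases s' <;> simp [Complex.conj_eq_iff_im.2 him]

/-- The triangles of the sector: those of the lower half (`s = false`) and their mirror images
(`s = true`). -/
def tri : Bool × Cell n → Finset ℂ
  | (s, c) => ((cellVertices c).image P.pos).image (reflect s)

/-- The angle between the real axis and a side of a triangle of the sector. -/
def signedTilt : Bool × Cell n → ℝ
  | (false, c) => P.tilt c
  | (true, c) => -P.tilt c

theorem reflect_pos_mem_tri_iff {s s' : Bool} {w : Vertex n} {c : Cell n} :
    reflect s (P.pos w) ∈ P.tri (s', c) ↔ w ∈ cellVertices c ∧ (s = s' ∨ (P.pos w).im = 0) := by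
  simp only [tri, Finset.mem_image, exists_exists_and_eq_and, eq_comm (b := reflect s (P.pos w)),
    reflect_pos_eq_iff]
  exact ⟨fun ⟨_, hw, rfl, h⟩ => ⟨hw, h⟩, fun ⟨hw, h⟩ => ⟨w, hw, rfl, h⟩⟩

theorem card_tri (c : Bool × Cell n) : (P.tri c).card = 3 := by
  rw [tri, Finset.card_image_of_injective _ (reflect c.1).injective,
    Finset.card_image_of_injective _ P.pos_injective, card_cellVertices]

theorem dist_eq_one_of_mem_tri (c : Bool × Cell n) (x : ℂ) (hx : x ∈ P.tri c) (y : ℂ)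
    (hy : y ∈ P.tri c) (hxy : x ≠ y) : dist x y = 1 := by
  obtain ⟨s, c⟩ := c
  obtain ⟨a, ha⟩ := P.exists_image_pos_eq_unitTriangle c
  obtain ⟨x, hx', rfl⟩ := Finset.mem_image.1 hx
  obtain ⟨y, hy', rfl⟩ := Finset.mem_image.1 hy
  have dist_reflect : dist (reflect s x) (reflect s y) = dist x y := by
    cases s
    · rfl
    · exact Complex.isometry_conj.dist_eq x y
  rw [dist_reflect]
  exact dist_eq_one_of_mem_unitTriangle (ha ▸ hx') (ha ▸ hy') (ne_of_apply_ne _ hxy)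

theorem sub_pow_six_of_mem_tri (c : Bool × Cell n) (x : ℂ) (hx : x ∈ P.tri c) (y : ℂ)
    (hy : y ∈ P.tri c) (hxy : x ≠ y) : (x - y) ^ 6 = unitVec (6 * P.signedTilt c) := by
  obtain ⟨s, c⟩ := c
  obtain ⟨a, ha⟩ := P.exists_image_pos_eq_unitTriangle c
  obtain ⟨x, hx', rfl⟩ := Finset.mem_image.1 hx
  obtain ⟨y, hy', rfl⟩ := Finset.mem_image.1 hy
  have h := sub_pow_six_of_mem_unitTriangle (ha ▸ hx') (ha ▸ hy') (ne_of_apply_ne _ hxy)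
  cases s
  · exact h
  · rw [signedTilt, mul_neg, ← conj_unitVec, ← h, map_pow, map_sub]
    rfl

/-! ### Separating the triangles -/

theorem forall_mem_tri {c : Bool × Cell n} {p : ℂ → Prop} :
    (∀ x ∈ (P.tri c : Set ℂ), p x) ↔ ∀ w ∈ cellVertices c.2, p (reflect c.1 (P.pos w)) := by
  simp [tri]

theorem disjoint_convexHull_tri {s s' : Bool} {c c' : Cell n} (ℓ : ℂ →L[ℝ] ℝ) {r : ℝ}
    (hc : ∀ w ∈ cellVertices c, ℓ (P.pos w) < r)
    (hc' : ∀ w ∈ cellVertices c', r ≤ ℓ (reflect (s ^^ s') (P.pos w))) :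
    Disjoint (convexHull ℝ (P.tri (s, c) : Set ℂ)) (convexHull ℝ (P.tri (s', c') : Set ℂ)) := by
  refine disjoint_convexHull_of_lt_of_le (ℓ.comp (reflect s : ℂ →L[ℝ] ℂ)) (r := r)
    (P.forall_mem_tri.2 fun w hw => ?_) (P.forall_mem_tri.2 fun w hw => ?_)
  · simpa [reflect_reflect] using hc w hw
  · simpa [reflect_reflect] using hc' w hw

theorem disjoint_interior_convexHull_tri {s s' : Bool} {c c' : Cell n} (ℓ : ℂ →L[ℝ] ℝ) (hℓ : ℓ ≠ 0)
    {r : ℝ} (hc : ∀ w ∈ cellVertices c, ℓ (P.pos w) ≤ r)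
    (hc' : ∀ w ∈ cellVertices c', r ≤ ℓ (reflect (s ^^ s') (P.pos w))) :
    Disjoint (interior (convexHull ℝ (P.tri (s, c) : Set ℂ)))
      (interior (convexHull ℝ (P.tri (s', c') : Set ℂ))) := by
  refine disjoint_interior_convexHull_of_le (ℓ.comp (reflect s : ℂ →L[ℝ] ℂ)) (fun h => hℓ ?_)
    (r := r) (P.forall_mem_tri.2 fun w hw => ?_) (P.forall_mem_tri.2 fun w hw => ?_)
  · ext z
    simpa [reflect_reflect] using DFunLike.congr_fun h (reflect s z)
  · simpa [reflect_reflect] using hc w hw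
  · simpa [reflect_reflect] using hc' w hw

theorem abs_signedTilt_link (s : Bool) (i : Fin n) : |P.signedTilt (s, .inl i)| = P.δ := by
  cases s <;> simp [signedTilt, tilt, abs_mul, abs_of_pos P.δ_pos]

theorem abs_signedTilt_pendant (s e : Bool) : |P.signedTilt (s, .inr e)| = P.φ := by
  cases s <;> simp [signedTilt, tilt, abs_of_pos P.φ_pos]

theorem abs_signedTilt_lt (c : Bool × Cell n) : |P.signedTilt c| < π / 6 := by
  rcases c with ⟨s, i | e⟩
  · exact (P.abs_signedTilt_link s i).trans_lt P.δ_lt_pi_div_six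
  · exact (P.abs_signedTilt_pendant s e).trans_lt P.φ_lt_pi_div_six

theorem signedTilt_ne_zero (c : Bool × Cell n) : P.signedTilt c ≠ 0 := by
  rw [← abs_pos]
  rcases c with ⟨s, i | e⟩
  · exact P.δ_pos.trans_eq (P.abs_signedTilt_link s i).symm
  · exact P.φ_pos.trans_eq (P.abs_signedTilt_pendant s e).symm

theorem eq_of_signedTilt_eq {s s' : Bool} {c c' : Cell n} (hc : P.tilt c = P.tilt c')
    (h : P.signedTilt (s, c) = P.signedTilt (s', c')) : s = s' := by
  have hc' : P.tilt c' ≠ 0 := P.signedTilt_ne_zero (false, c')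
  cases s <;> cases s' <;> simp_all [signedTilt, neg_eq_self, self_eq_neg]

theorem signedTilt_succ_ne {s : Bool} {i j : Fin n} (hij : (i : ℕ) + 1 = j) :
    P.signedTilt (s, .inl i) ≠ P.signedTilt (s, .inl j) := by
  have h : P.signedTilt (s, .inl j) = -P.signedTilt (s, .inl i) := by
    cases s <;> simp [signedTilt, tilt, ← hij, pow_succ]
  rw [h]
  exact self_ne_neg.2 (P.signedTilt_ne_zero _)

theorem disjoint_convexHull_link {s s' : Bool} {i j : Fin n} (hij : i < j)
    (h : P.signedTilt (s, .inl i) = P.signedTilt (s', .inl j)) :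
    Disjoint (convexHull ℝ (P.tri (s, .inl i) : Set ℂ))
      (convexHull ℝ (P.tri (s', .inl j) : Set ℂ)) := by
  obtain rfl | rfl := Bool.eq_or_eq_not s' s
  · have hj : (i : ℕ) + 1 < j := lt_of_le_of_ne hij fun hj => P.signedTilt_succ_ne hj h
    refine P.disjoint_convexHull_tri Complex.reCLM (r := j * cos P.δ)
      (fun w hw => (P.link_re_mem_Icc hw).2.trans_lt ?_) fun w hw => ?_
    · exact mul_lt_mul_of_pos_right (by exact_mod_cast hj) P.cos_δ_pos
    · simpa using (P.link_re_mem_Icc hw).1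
  · refine P.disjoint_convexHull_tri (Complex.reCLM + Complex.imCLM) (r := j * cos P.δ)
      (fun w hw => (P.link_re_add_im_lt hw).trans_le ?_) fun w hw => ?_
    · exact_mod_cast P.natCast_mul_cos_δ_le (Nat.succ_le_of_lt hij)
    · have := (P.link_re_mem_Icc hw).1
      have := P.pos_im_nonpos w
      simp only [Bool.bne_not_self, reflect_true, add_apply, Complex.reCLM_apply,
        Complex.imCLM_apply, Complex.conj_re, Complex.conj_im]
      linarith

theorem disjoint_convexHull_pendant (s : Bool) :
    Disjoint (convexHull ℝ (P.tri (s, .inr false) : Set ℂ))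
      (convexHull ℝ (P.tri (s, .inr true) : Set ℂ)) := by
  refine P.disjoint_convexHull_tri Complex.reCLM (r := n * cos P.δ - 1)
    (fun w hw => P.left_pendant_re_lt hw) fun w hw => ?_
  simpa using P.le_right_pendant_re hw

theorem disjoint_convexHull_of_signedTilt_eq {c c' : Bool × Cell n} (hne : c ≠ c')
    (h : P.signedTilt c = P.signedTilt c') :
    Disjoint (convexHull ℝ (P.tri c : Set ℂ)) (convexHull ℝ (P.tri c' : Set ℂ)) := by
  have habs := congrArg abs h
  rcases c with ⟨s, i | e⟩ <;> rcases c' with ⟨s', j | e'⟩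
  · obtain hij | rfl | hij := lt_trichotomy i j
    · exact P.disjoint_convexHull_link hij h
    · exact absurd (congrArg (·, _) (P.eq_of_signedTilt_eq rfl h)) hne
    · exact (P.disjoint_convexHull_link hij h.symm).symm
  · rw [abs_signedTilt_link, abs_signedTilt_pendant] at habs
    exact absurd habs P.φ_lt_δ.ne'
  · rw [abs_signedTilt_link, abs_signedTilt_pendant] at habs
    exact absurd habs P.φ_lt_δ.ne
  · obtain rfl : s = s' := P.eq_of_signedTilt_eq (c := .inr e) (c' := .inr e') rfl h
    cases e <;> cases e'
    · exact absurd rfl hne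
    · exact P.disjoint_convexHull_pendant s
    · exact (P.disjoint_convexHull_pendant s).symm
    · exact absurd rfl hne

theorem disjoint_interior_convexHull_link (s : Bool) {i j : Fin n} (hij : i < j) :
    Disjoint (interior (convexHull ℝ (P.tri (s, .inl i) : Set ℂ)))
      (interior (convexHull ℝ (P.tri (s, .inl j) : Set ℂ))) := by
  refine P.disjoint_interior_convexHull_tri Complex.reCLM (DFunLike.ne_iff.2 ⟨1, by simp⟩)
    (r := j * cos P.δ) (fun w hw => (P.link_re_mem_Icc hw).2.trans ?_) fun w hw => ?_
  · exact_mod_cast P.natCast_mul_cos_δ_le (Nat.succ_le_of_lt hij)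
  · simpa using (P.link_re_mem_Icc hw).1

theorem disjoint_interior_convexHull_pendant_link (s e : Bool) (i : Fin n) :
    Disjoint (interior (convexHull ℝ (P.tri (s, .inr e) : Set ℂ)))
      (interior (convexHull ℝ (P.tri (s, .inl i) : Set ℂ))) := by
  cases e
  · refine P.disjoint_interior_convexHull_tri (sin P.δ • Complex.reCLM + cos P.δ • Complex.imCLM)
      (DFunLike.ne_iff.2 ⟨Complex.I, by simp [P.cos_δ_pos.ne']⟩)
      (fun w hw => P.left_pendant_slant_le hw) fun w hw => ?_
    simpa using P.le_link_slant hw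
  · refine P.disjoint_interior_convexHull_tri Complex.imCLM
      (DFunLike.ne_iff.2 ⟨Complex.I, by simp⟩) (fun w hw => P.right_pendant_im_le hw)
      fun w hw => ?_
    simpa using P.le_link_im hw

theorem disjoint_interior_convexHull_same_side {s : Bool} {c c' : Cell n} (hne : c ≠ c') :
    Disjoint (interior (convexHull ℝ (P.tri (s, c) : Set ℂ)))
      (interior (convexHull ℝ (P.tri (s, c') : Set ℂ))) := by
  have pendants := (P.disjoint_convexHull_pendant s).mono interior_subset interior_subset
  rcases c with i | e <;> rcases c' with j | e'
  · obtain hij | hij := lt_or_gt_of_ne (ne_of_apply_ne _ hne)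
    · exact P.disjoint_interior_convexHull_link s hij
    · exact (P.disjoint_interior_convexHull_link s hij).symm
  · exact (P.disjoint_interior_convexHull_pendant_link s e' i).symm
  · exact P.disjoint_interior_convexHull_pendant_link s e j
  · cases e <;> cases e' <;> first | exact absurd rfl hne | exact pendants | exact pendants.symm

theorem disjoint_interior_convexHull_opposite (c c' : Cell n) :
    Disjoint (interior (convexHull ℝ (P.tri (false, c) : Set ℂ)))
      (interior (convexHull ℝ (P.tri (true, c') : Set ℂ))) := by
  refine P.disjoint_interior_convexHull_tri Complex.imCLM
    (DFunLike.ne_iff.2 ⟨Complex.I, by simp⟩) (fun w _ => P.pos_im_nonpos w) fun w _ => ?_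
  simpa using P.pos_im_nonpos w

theorem disjoint_interior_convexHull {c c' : Bool × Cell n} (hne : c ≠ c') :
    Disjoint (interior (convexHull ℝ (P.tri c : Set ℂ)))
      (interior (convexHull ℝ (P.tri c' : Set ℂ))) := by
  rcases c with ⟨_ | _, c⟩ <;> rcases c' with ⟨_ | _, c'⟩
  · exact P.disjoint_interior_convexHull_same_side (ne_of_apply_ne _ hne)
  · exact P.disjoint_interior_convexHull_opposite c c'
  · exact (P.disjoint_interior_convexHull_opposite c' c).symm
  · exact P.disjoint_interior_convexHull_same_side (ne_of_apply_ne _ hne)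

/-! ### The graph of the sector and its degrees -/

/-- The `2 * n + 4` triangles of the sector as a family of unit triangles. -/
def family : UnitTriangleFamily (Bool × Cell n) where
  tri := P.tri
  dir c := unitVec (6 * P.signedTilt c)
  card_tri := P.card_tri
  dist_eq_one := P.dist_eq_one_of_mem_tri
  sub_pow_six := P.sub_pow_six_of_mem_tri
  disjoint_of_dir_eq _ _ hne h := P.disjoint_convexHull_of_signedTilt_eq hne <|
    unitVec_six_mul_inj (P.abs_signedTilt_lt _) (P.abs_signedTilt_lt _) h

/-- The unit-distance graph of the sector. -/
def graph : UnitDistGraph := P.family.graph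

theorem nonOverlapping_graph : P.graph.NonOverlapping :=
  P.family.nonOverlapping_graph fun _ _ => P.disjoint_interior_convexHull

theorem triangleCount_graph : P.graph.triangleCount = 2 * n + 4 := by
  simp only [graph, P.family.triangleCount_graph, Fintype.card_prod, Fintype.card_sum,
    Fintype.card_bool, Fintype.card_fin]
  ring

/-- The triangle of the lower half that has the given vertex of the chain as its right end. -/
def leftCell (k : Fin (n + 1)) : Cell n := Fin.cases (.inr false) .inl k

/-- The triangle of the lower half that has the given vertex of the chain as its left end. -/
def rightCell (k : Fin (n + 1)) : Cell n := Fin.lastCases (.inr true) .inl k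

theorem inl_eq_leftCell_iff {i : Fin n} {k : Fin (n + 1)} : .inl i = leftCell k ↔ k = i.succ := by
  induction k using Fin.cases <;> simp [leftCell, Fin.ext_iff, eq_comm]

theorem inr_eq_leftCell_iff {e : Bool} {k : Fin (n + 1)} :
    .inr e = leftCell k ↔ e = false ∧ k = 0 := by
  induction k using Fin.cases <;> simp [leftCell]

theorem inl_eq_rightCell_iff {i : Fin n} {k : Fin (n + 1)} :
    .inl i = rightCell k ↔ k = i.castSucc := by
  induction k using Fin.lastCases <;> simp [rightCell, Fin.ext_iff, i.isLt.ne', eq_comm]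

theorem inr_eq_rightCell_iff {e : Bool} {k : Fin (n + 1)} :
    .inr e = rightCell k ↔ e = true ∧ k = Fin.last n := by
  induction k using Fin.lastCases <;> simp [rightCell, Fin.castSucc_ne_last]

theorem leftCell_ne_rightCell (k : Fin (n + 1)) : leftCell k ≠ rightCell k := by
  intro h
  rcases hc : leftCell k with i | e
  · have hl := inl_eq_leftCell_iff.1 hc.symm
    have hr := inl_eq_rightCell_iff.1 (hc.symm.trans h)
    exact i.castSucc_lt_succ.ne (hr.symm.trans hl)
  · have hl := inr_eq_leftCell_iff.1 hc.symm
    have hr := inr_eq_rightCell_iff.1 (hc.symm.trans h)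
    exact Bool.false_ne_true (hl.1.symm.trans hr.1)

/-- The triangles of the lower half through a given vertex. -/
def cellsAt : Vertex n → Finset (Cell n)
  | .axis i => {.inl i}
  | .chain k => {leftCell k, rightCell k}
  | .tip e _ => {.inr e}

theorem mem_cellsAt {w : Vertex n} {c : Cell n} : c ∈ cellsAt w ↔ w ∈ cellVertices c := by
  rcases w with i | k | ⟨e, r⟩ <;> rcases c with j | e'
  · simp [cellsAt, cellVertices, eq_comm]
  · simp [cellsAt, cellVertices]
  · simp [cellsAt, cellVertices, inl_eq_leftCell_iff, inl_eq_rightCell_iff, or_comm]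
  · cases e' <;> simp [cellsAt, cellVertices, inr_eq_leftCell_iff, inr_eq_rightCell_iff, chainEnd]
  · simp [cellsAt, cellVertices]
  · cases r <;> simp [cellsAt, cellVertices, eq_comm]

theorem cellsAt_nonempty (w : Vertex n) : (cellsAt w).Nonempty := by
  cases w <;> simp [cellsAt]

theorem mem_V_graph {v : ℂ} : v ∈ P.graph.V ↔ ∃ s w, reflect s (P.pos w) = v := by
  rw [graph, UnitTriangleFamily.mem_V]
  constructor
  · rintro ⟨⟨s, c⟩, hv⟩
    obtain ⟨x, hx, rfl⟩ := Finset.mem_image.1 hv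
    obtain ⟨w, -, rfl⟩ := Finset.mem_image.1 hx
    exact ⟨s, w, rfl⟩
  · rintro ⟨s, w, rfl⟩
    obtain ⟨c, hc⟩ := cellsAt_nonempty w
    exact ⟨(s, c), P.reflect_pos_mem_tri_iff.2 ⟨mem_cellsAt.1 hc, .inl rfl⟩⟩

theorem degree_graph (s : Bool) (w : Vertex n) : P.graph.degree (reflect s (P.pos w)) =
    2 * ((if (P.pos w).im = 0 then 2 else 1) * (cellsAt w).card) := by
  have hcells : (Finset.univ.filter fun c => reflect s (P.pos w) ∈ P.tri c) =
      (if (P.pos w).im = 0 then Finset.univ else {s}) ×ˢ cellsAt w := by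
    ext ⟨s', c⟩
    rw [Finset.mem_filter_univ, reflect_pos_mem_tri_iff, Finset.mem_product, mem_cellsAt]
    split_ifs with h <;> simp [h, and_comm, eq_comm]
  have hdeg := P.family.degree_graph (reflect s (P.pos w))
  rw [show P.family.tri = P.tri from rfl, hcells, Finset.card_product] at hdeg
  rw [graph, hdeg]
  split_ifs <;> simp

theorem degree_axis (s : Bool) (i : Fin n) : P.graph.degree (reflect s (P.pos (.axis i))) = 4 := by
  rw [degree_graph, if_pos (show (P.pos (.axis i)).im = 0 from rfl), cellsAt, Finset.card_singleton]

theorem degree_chain (s : Bool) (k : Fin (n + 1)) :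
    P.graph.degree (reflect s (P.pos (.chain k))) = 4 := by
  have him : (P.pos (.chain k)).im ≠ 0 := (P.chainPoint_im_neg k).ne
  rw [degree_graph, if_neg him, cellsAt, Finset.card_pair (leftCell_ne_rightCell k)]

theorem degree_tip (s e r : Bool) : P.graph.degree (reflect s (P.pos (.tip e r))) = 2 := by
  rw [degree_graph, if_neg (P.tip_im_neg e r).ne, cellsAt, Finset.card_singleton]

theorem degree_eq_two_or_four {v : ℂ} (hv : v ∈ P.graph.V) :
    P.graph.degree v = 2 ∨ P.graph.degree v = 4 := by
  obtain ⟨s, i | k | ⟨e, r⟩, rfl⟩ := P.mem_V_graph.1 hv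
  · exact .inr (P.degree_axis s i)
  · exact .inr (P.degree_chain s k)
  · exact .inl (P.degree_tip s e r)

theorem mem_V_and_degree_eq_two_iff {v : ℂ} :
    v ∈ P.graph.V ∧ P.graph.degree v = 2 ↔ ∃ s e r, reflect s (P.pos (.tip e r)) = v := by
  constructor
  · rintro ⟨hv, hdeg⟩
    obtain ⟨s, i | k | ⟨e, r⟩, rfl⟩ := P.mem_V_graph.1 hv
    · simp [degree_axis] at hdeg
    · simp [degree_chain] at hdeg
    · exact ⟨s, e, r, rfl⟩
  · rintro ⟨s, e, r, rfl⟩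
    exact ⟨P.mem_V_graph.2 ⟨s, _, rfl⟩, P.degree_tip s e r⟩

/-! ### The bounding lines -/

theorem left_tips_sub_eq : P.pos (.tip true false) =
    P.pos (.tip false false) + (n * cos P.δ / cos P.φ : ℝ) * unitVec (-P.φ) := by
  have hcos := P.cos_φ_pos.ne'
  apply Complex.ext
  · simp only [pos, chainPoint, chainEnd, Complex.sub_re, Complex.add_re, Complex.re_ofReal_mul,
      unitVec_re, cos_neg, Fin.val_last, Fin.val_zero, Nat.cast_zero]
    field_simp
    ring
  · have h : n * cos P.δ / cos P.φ * sin P.φ = sin P.δ := by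
      field_simp
      linarith [P.sin_δ_mul_cos_φ]
    simp only [pos, chainPoint, chainEnd, Complex.sub_im, Complex.add_im, Complex.im_ofReal_mul,
      unitVec_im, sin_neg, mul_neg, h, Fin.val_last, Fin.val_zero, P.odd_n.neg_one_pow, pow_zero]
    ring

theorem exists_forall_tip_mem_line : ∃ c : ℝ, ∀ e r,
    P.pos (.tip e r) ∈ line c (unitVec (-P.φ)) := by
  have hsin : sin (-P.φ) ≠ 0 := by simpa using P.sin_φ_pos.ne'
  obtain ⟨c, hc⟩ := exists_mem_line_unitVec hsin (P.pos (.tip false false))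
  have hleft (e : Bool) : P.pos (.tip e false) ∈ line c (unitVec (-P.φ)) := by
    cases e
    · exact hc
    · exact P.left_tips_sub_eq ▸ add_ofReal_mul_mem_line hc _
  refine ⟨c, fun e r => ?_⟩
  cases r
  · exact hleft e
  · simpa [right_tip_eq] using add_ofReal_mul_mem_line (hleft e) 1

theorem conj_mem_of_degree_eq_two {v : ℂ} (hv : v ∈ P.graph.V ∧ P.graph.degree v = 2) :
    starRingEnd ℂ v ∈ P.graph.V ∧ P.graph.degree (starRingEnd ℂ v) = 2 := by
  obtain ⟨s, e, r, rfl⟩ := P.mem_V_and_degree_eq_two_iff.1 hv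
  exact P.mem_V_and_degree_eq_two_iff.2 ⟨!s, e, r, (conj_reflect s _).symm⟩

end RingSector

theorem exists_subgraph_G1_general {n : ℕ} (hodd : Odd n) (hn : 1 < n) {φ : ℝ} (hφ : 0 < φ)
    (hφ' : φ < π / 2) (htan : n * tan φ < tan (π / 6)) :
    ∃ G : UnitDistGraph, ∃ c d₁ d₂ : ℂ, d₁ ≠ 0 ∧ d₂ ≠ 0 ∧
      line c d₁ ≠ line c d₂ ∧
      G.NonOverlapping ∧ G.OnlyUnitTriangles ∧ G.NoAdditionalTriangles ∧
      G.triangleCount = 2 * n + 4 ∧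
      (∀ v ∈ G.V, G.degree v = 2 ∨ G.degree v = 4) ∧
      rot c (2 * φ) '' line c d₁ = line c d₂ ∧
      (∀ v ∈ G.V, G.degree v = 2 →
        v ∈ line c d₁ ∪ line c d₂) ∧
      rot c (2 * φ) ''
          {v : ℂ | v ∈ G.V ∧ G.degree v = 2 ∧ v ∈ line c d₁} =
        {v : ℂ | v ∈ G.V ∧ G.degree v = 2 ∧ v ∈ line c d₂} := by
  let P : RingSector n := ⟨φ, hodd, hn, hφ, hφ', htan⟩
  obtain ⟨c, hc⟩ := P.exists_forall_tip_mem_line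
  refine ⟨P.graph, c, unitVec (-φ), unitVec φ, unitVec_ne_zero _, unitVec_ne_zero _,
    line_unitVec_neg_ne P.sin_φ_pos.ne' P.cos_φ_pos.ne' c, P.nonOverlapping_graph,
    P.family.onlyUnitTriangles_graph, P.family.noAdditionalTriangles_graph,
    P.triangleCount_graph, fun v => P.degree_eq_two_or_four, ?_, ?_, ?_⟩
  · simpa using rot_image_inter_line (D := Set.univ) (fun _ _ => trivial) c (φ := φ)
  · intro v hv hdeg
    obtain ⟨s, e, r, rfl⟩ := P.mem_V_and_degree_eq_two_iff.1 ⟨hv, hdeg⟩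
    cases s
    · exact .inl (hc e r)
    · exact .inr (by simpa using conj_mem_line (hc e r))
  · have := rot_image_inter_line (φ := φ) (D := {v | v ∈ P.graph.V ∧ P.graph.degree v = 2})
      (fun _ => P.conj_mem_of_degree_eq_two) c
    simpa only [Set.inter_def, Set.mem_ofPred_eq, and_assoc] using this

theorem seventeen_mul_tan_pi_div_hundred_lt : 17 * tan (π / 100) < tan (π / 6) := by
  have hpi := pi_pos
  have hpi' := pi_lt_d2
  have hsin : sin (π / 100) < 0.0315 := (sin_lt (by positivity)).trans (by linarith)
  have hcos : 0.99 < cos (π / 100) := by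
    refine lt_of_lt_of_le ?_ one_sub_sq_div_two_le_cos
    nlinarith
  have h3 : √3 < 1.8 := (sqrt_lt' (by norm_num)).2 (by norm_num)
  have htan : tan (π / 100) < 0.032 := by
    rw [tan_eq_sin_div_cos, div_lt_iff₀ (by linarith)]
    linarith
  have : 17 * 0.032 < 1 / √3 := by
    rw [lt_div_iff₀ (by positivity)]
    linarith
  rw [tan_pi_div_six]
  linarith

open Real in
/-- There exists a finite straight-line unit-distance graph
(not necessarily planar) with exactly 38 unit triangles with pairwise disjoint
interiors, in which every edge lies in a unit triangle, with no additional
triangles, all vertex degrees equal to 2 or 4, and two distinct lines `g₁`,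
`g₂` through a common point `c`, meeting at the angle `2π/100 = 3.6°` (the
rotation about `c` by `2π/100` maps `g₁` onto `g₂`), such that every degree-2
vertex lies on `g₁ ∪ g₂` and this rotation maps the set of degree-2 vertices on
`g₁` bijectively onto the set of degree-2 vertices on `g₂`. -/
theorem exists_subgraph_G1 :
    ∃ G : UnitDistGraph, ∃ c d₁ d₂ : ℂ, d₁ ≠ 0 ∧ d₂ ≠ 0 ∧
      UnitDistGraph.line c d₁ ≠ UnitDistGraph.line c d₂ ∧
      G.NonOverlapping ∧ G.OnlyUnitTriangles ∧ G.NoAdditionalTriangles ∧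
      G.triangleCount = 38 ∧
      (∀ v ∈ G.V, G.degree v = 2 ∨ G.degree v = 4) ∧
      (UnitDistGraph.rot c (2 * π / 100)) '' UnitDistGraph.line c d₁ =
        UnitDistGraph.line c d₂ ∧
      (∀ v ∈ G.V, G.degree v = 2 →
        v ∈ UnitDistGraph.line c d₁ ∪ UnitDistGraph.line c d₂) ∧
      (UnitDistGraph.rot c (2 * π / 100)) ''
          {v : ℂ | v ∈ G.V ∧ G.degree v = 2 ∧ v ∈ UnitDistGraph.line c d₁} =
        {v : ℂ | v ∈ G.V ∧ G.degree v = 2 ∧ v ∈ UnitDistGraph.line c d₂} := by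
  have h := exists_subgraph_G1_general (n := 17) (φ := π / 100) (by decide) (by norm_num)
    (by positivity) (by linarith [pi_pos]) (by exact_mod_cast seventeen_mul_tan_pi_div_hundred_lt)
  simpa only [mul_div_assoc] using h
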